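/- arXiv:1606.06935 — 2 statements merged into one kernel-verified Lean document; each statement's English description precedes it below -/
import Mathlib

section
/- For every n ≥ 1, the abelian complexity of the Rudin-Shapiro sequence satisfies ρ_r(n) = M_r(n) + 1, and likewise ρ_{r'}(n) = M_{r'}(n) + 1 for the related sequence r'. -/
/-- The partial sum `Σ_w(i, n) = w(i) + w(i+1) + ⋯ + w(i+n−1)`. -/
def pSum (w : ℕ → ℤ) (i n : ℕ) : ℤ := ∑ j ∈ Finset.range n, w (i + j)

/-- The Parikh (abelianization) vector of the factor of `w` of length `n`
starting at position `i`. -/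
def parikh (w : ℕ → ℤ) (n i : ℕ) : ℤ → ℕ :=
  fun a => ((Finset.range n).filter fun j => w (i + j) = a).card

/-- The abelian complexity of `w`: the number of abelian equivalence classes
of factors of `w` of length `n`. -/
noncomputable def abelianComplexity (w : ℕ → ℤ) (n : ℕ) : ℕ :=
  (Set.range (parikh w n)).ncard

/-!
For a binary sequence, the abelian class of a factor of length `n` is determined by the number of
occurrences of one letter. Moving the window by one position changes this number by at most one, so
it takes every value between its minimum and its maximum; hence for the letters `±1` the complexity
`ρ_w(n)` is `(max Σ - min Σ) / 2 + 1`. The Rudin–Shapiro sequence is `(-1) ^ e(n)`, where `e(n)`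
counts the occurrences of `11` in the binary expansion of `n`, and prepending `110` to an expansion
creates exactly one new such occurrence. So every factor of `r`, and of `r'`, recurs negated, which
gives `min Σ = -max Σ`.
-/

theorem ordConnected_range_of_uIcc_succ_subset {α : Type*} [LinearOrder α] {f : ℕ → α}
    (hf : ∀ i, Set.uIcc (f i) (f (i + 1)) ⊆ Set.range f) : (Set.range f).OrdConnected := by
  have uIcc_subset {i j : ℕ} (hij : i ≤ j) : Set.uIcc (f i) (f j) ⊆ Set.range f := by
    induction j, hij using Nat.le_induction with
    | base => simp
    | succ j _ ih =>
      exact Set.uIcc_subset_uIcc_union_uIcc.trans (Set.union_subset ih (hf j))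
  rw [Set.ordConnected_iff_uIcc_subset]
  rintro _ ⟨i, rfl⟩ _ ⟨j, rfl⟩
  rcases le_total i j with hij | hji
  · exact uIcc_subset hij
  · rw [Set.uIcc_comm]
    exact uIcc_subset hji

section Parikh

variable (w : ℕ → ℤ) (n i : ℕ) (a : ℤ)

theorem parikh_eq_sum :
    parikh w n i a = ∑ j ∈ Finset.range n, if w (i + j) = a then 1 else 0 :=
  Finset.card_filter _ _

theorem parikh_succ_add_ite :
    parikh w n (i + 1) a + (if w i = a then 1 else 0) =
      parikh w n i a + (if w (i + n) = a then 1 else 0) := by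
  rw [parikh_eq_sum, parikh_eq_sum,
    ← Finset.sum_range_succ (fun j => if w (i + j) = a then 1 else 0), Finset.sum_range_succ']
  simp only [add_zero, add_assoc, add_comm 1]

theorem ordConnected_range_parikh : (Set.range fun i => parikh w n i a).OrdConnected := by
  refine ordConnected_range_of_uIcc_succ_subset fun i c hc => ?_
  have hstep := parikh_succ_add_ite w n i a
  obtain rfl | rfl : c = parikh w n i a ∨ c = parikh w n (i + 1) a := by
    rw [Set.mem_uIcc] at hc
    split_ifs at hstep <;> omega
  exacts [⟨i, rfl⟩, ⟨i + 1, rfl⟩]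

end Parikh

section Binary

variable {w : ℕ → ℤ} {a b : ℤ}

theorem parikh_eq_zero_of_forall_ne {c : ℤ} (hc : ∀ k, w k ≠ c) (n i : ℕ) :
    parikh w n i c = 0 := by
  simp [parikh_eq_sum, hc]

theorem parikh_add_parikh (hw : ∀ k, w k = a ∨ w k = b) (hab : a ≠ b) (n i : ℕ) :
    parikh w n i a + parikh w n i b = n := by
  rw [parikh_eq_sum, parikh_eq_sum, ← Finset.sum_add_distrib]
  trans ∑ _j ∈ Finset.range n, 1
  · refine Finset.sum_congr rfl fun j _ => ?_
    rcases hw (i + j) with h | h <;> simp [h, hab, hab.symm]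
  · simp

theorem pSum_eq_mul_parikh_add (hw : ∀ k, w k = a ∨ w k = b) (n i : ℕ) :
    pSum w i n = (a - b) * parikh w n i a + b * n := by
  have hletter (k : ℕ) : w k = (a - b) * (if w k = a then 1 else 0) + b := by
    split_ifs with h
    · rw [h]; ring
    · rw [(hw k).resolve_left h]; ring
  rw [pSum, Finset.sum_congr rfl fun j _ => hletter (i + j), Finset.sum_add_distrib,
    ← Finset.mul_sum, parikh_eq_sum]
  simp [mul_comm]

theorem injOn_eval_range_parikh (hw : ∀ k, w k = a ∨ w k = b) (n : ℕ) :
    Set.InjOn (Function.eval a) (Set.range (parikh w n)) := by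
  rintro _ ⟨i, rfl⟩ _ ⟨j, rfl⟩ (heq : parikh w n i a = parikh w n j a)
  funext c
  by_cases hca : c = a
  · rw [hca, heq]
  by_cases hcb : c = b
  · have hab : a ≠ b := fun hab => hca (hcb.trans hab.symm)
    have hi := parikh_add_parikh hw hab n i
    have hj := parikh_add_parikh hw hab n j
    rw [hcb]
    omega
  have hc (k : ℕ) : w k ≠ c := by
    rintro rfl
    exact (hw k).elim hca hcb
  rw [parikh_eq_zero_of_forall_ne hc, parikh_eq_zero_of_forall_ne hc]

theorem abelianComplexity_eq_ncard_range_parikh (hw : ∀ k, w k = a ∨ w k = b) (n : ℕ) :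
    abelianComplexity w n = (Set.range fun i => parikh w n i a).ncard := by
  rw [abelianComplexity, ← (injOn_eval_range_parikh hw n).ncard_image, ← Set.range_comp]
  rfl

theorem abelianComplexity_eq_of_isLeast_of_isGreatest_parikh (hw : ∀ k, w k = a ∨ w k = b)
    {n A B : ℕ} (hA : IsLeast (Set.range fun i => parikh w n i a) A)
    (hB : IsGreatest (Set.range fun i => parikh w n i a) B) :
    abelianComplexity w n = B + 1 - A := by
  have hrange : (Set.range fun i => parikh w n i a) = Set.Icc A B :=
    Set.Subset.antisymm (fun _ hc => ⟨hA.2 hc, hB.2 hc⟩)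
      ((ordConnected_range_parikh w n a).out hA.1 hB.1)
  rw [abelianComplexity_eq_ncard_range_parikh hw, hrange, ← Finset.coe_Icc,
    Set.ncard_coe_finset, Nat.card_Icc]

theorem sub_mul_abelianComplexity_eq (hw : ∀ k, w k = a ∨ w k = b) (hba : b < a) {n : ℕ}
    {m M : ℤ} (hm : IsLeast (Set.range fun i => pSum w i n) m)
    (hM : IsGreatest (Set.range fun i => pSum w i n) M) :
    (a - b) * abelianComplexity w n = M - m + (a - b) := by
  obtain ⟨⟨i, rfl⟩, hi⟩ := hm
  obtain ⟨⟨j, rfl⟩, hj⟩ := hM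
  have parikh_le_of_pSum_le {k l : ℕ} (h : pSum w k n ≤ pSum w l n) :
      parikh w n k a ≤ parikh w n l a := by
    rw [pSum_eq_mul_parikh_add hw, pSum_eq_mul_parikh_add hw, add_le_add_iff_right] at h
    exact_mod_cast le_of_mul_le_mul_left h (sub_pos.2 hba)
  have hleast : IsLeast (Set.range fun k => parikh w n k a) (parikh w n i a) :=
    ⟨⟨i, rfl⟩, Set.forall_mem_range.2 fun k => parikh_le_of_pSum_le (hi ⟨k, rfl⟩)⟩
  have hgreatest : IsGreatest (Set.range fun k => parikh w n k a) (parikh w n j a) :=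
    ⟨⟨j, rfl⟩, Set.forall_mem_range.2 fun k => parikh_le_of_pSum_le (hj ⟨k, rfl⟩)⟩
  have hle : parikh w n i a ≤ parikh w n j a + 1 := Nat.le_succ_of_le (hleast.2 ⟨j, rfl⟩)
  rw [abelianComplexity_eq_of_isLeast_of_isGreatest_parikh hw hleast hgreatest]
  simp only [pSum_eq_mul_parikh_add hw]
  push_cast [Nat.cast_sub hle]
  ring

theorem abelianComplexity_eq_add_one_of_isGreatest (hw : ∀ k, w k = 1 ∨ w k = -1) {n : ℕ}
    (hneg : ∀ i, ∃ i', pSum w i' n = -pSum w i n) {M : ℤ}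
    (hM : IsGreatest (Set.range fun i => pSum w i n) M) :
    (abelianComplexity w n : ℤ) = M + 1 := by
  have hleast : IsLeast (Set.range fun i => pSum w i n) (-M) := by
    obtain ⟨⟨i, rfl⟩, hi⟩ := hM
    refine ⟨hneg i, Set.forall_mem_range.2 fun k => ?_⟩
    obtain ⟨k', hk'⟩ := hneg k
    have hle : pSum w k' n ≤ pSum w i n := hi ⟨k', rfl⟩
    exact neg_le.1 (hk' ▸ hle)
  have h := sub_mul_abelianComplexity_eq hw (by norm_num) hleast hM
  omega

end Binary

/-- Every prefix of `w` occurs, negated, at some even position `p`. Evenness makes the property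
stable under the passage from `w` to `k ↦ (-1) ^ k * w k`. -/
def PrefixesRecurNegated {R : Type*} [Neg R] (w : ℕ → R) : Prop :=
  ∀ N, ∃ p, Even p ∧ ∀ m < N, w (m + p) = -w m

namespace PrefixesRecurNegated

theorem neg_one_pow_mul {R : Type*} [Ring R] {w : ℕ → R} (h : PrefixesRecurNegated w) :
    PrefixesRecurNegated fun k => (-1) ^ k * w k := by
  intro N
  obtain ⟨p, hp, hneg⟩ := h N
  refine ⟨p, hp, fun m hm => ?_⟩
  simp only [pow_add, hp.neg_one_pow, mul_one, hneg m hm, mul_neg]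

theorem exists_pSum_eq_neg {w : ℕ → ℤ} (h : PrefixesRecurNegated w) (n i : ℕ) :
    ∃ i', pSum w i' n = -pSum w i n := by
  obtain ⟨p, -, hneg⟩ := h (i + n)
  refine ⟨i + p, ?_⟩
  rw [pSum, pSum, ← Finset.sum_neg_distrib]
  refine Finset.sum_congr rfl fun j hj => ?_
  rw [add_right_comm, hneg _ (Nat.add_lt_add_left (Finset.mem_range.1 hj) i)]

end PrefixesRecurNegated

/-- The recurrences of the Rudin–Shapiro sequence, for values in an arbitrary ring and with the
initial value `r 0` left free. -/
structure RudinShapiroRec {R : Type*} [Ring R] (r : ℕ → R) : Prop where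
  even (n : ℕ) : r (2 * n) = r n
  odd (n : ℕ) : r (2 * n + 1) = (-1) ^ n * r n

namespace RudinShapiroRec

variable {R : Type*} [Ring R] {r : ℕ → R}

theorem eq_or_eq_neg (h : RudinShapiroRec r) (k : ℕ) : r k = r 0 ∨ r k = -r 0 := by
  induction k using Nat.evenOddRec with
  | h0 => exact Or.inl rfl
  | h_even m ih => rwa [h.even]
  | h_odd m ih =>
    rw [h.odd]
    rcases neg_one_pow_eq_or R m with hm | hm <;> rcases ih with hr | hr <;> simp [hm, hr]

-- The binary expansion of `m + 6 * 2 ^ k` is that of `m`, padded to `k` digits, after `110`.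
theorem apply_add_six_mul_two_pow (h : RudinShapiroRec r) {k m : ℕ} (hm : m < 2 ^ k) :
    r (m + 6 * 2 ^ k) = -r m := by
  induction k generalizing m with
  | zero =>
    obtain rfl : m = 0 := by simpa using hm
    calc r 6 = r 3 := h.even 3
      _ = -r 1 := by simpa using h.odd 1
      _ = -r 0 := by simpa using h.odd 0
  | succ k ih =>
    rw [pow_succ] at hm
    rcases Nat.even_or_odd' m with ⟨l, rfl | rfl⟩
    · have hdouble : 2 * l + 6 * 2 ^ (k + 1) = 2 * (l + 6 * 2 ^ k) := by ring
      rw [hdouble, h.even, h.even, ih (by omega)]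
    · have hdouble : 2 * l + 1 + 6 * 2 ^ (k + 1) = 2 * (l + 6 * 2 ^ k) + 1 := by ring
      have heven : Even (6 * 2 ^ k) := Even.mul_right (by decide) _
      rw [hdouble, h.odd, h.odd, ih (by omega), pow_add, heven.neg_one_pow, mul_one, mul_neg]

theorem prefixesRecurNegated (h : RudinShapiroRec r) : PrefixesRecurNegated r := fun N =>
  ⟨6 * 2 ^ N, Even.mul_right (by decide) _, fun _ hm =>
    h.apply_add_six_mul_two_pow (hm.trans Nat.lt_two_pow_self)⟩

end RudinShapiroRec

/-- For the Rudin–Shapiro sequence `r` and the related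
sequence `r'(n) = (−1)^n r(n)`, the abelian complexities satisfy
`ρ_r(n) = M_r(n) + 1` and `ρ_{r'}(n) = M_{r'}(n) + 1` for all `n ≥ 1`. -/
theorem abelianComplexity_eq_max_add_one
    (r : ℕ → ℤ) (hr0 : r 0 = 1)
    (hre : ∀ n, r (2 * n) = r n)
    (hro : ∀ n, r (2 * n + 1) = (-1) ^ n * r n)
    (M M' : ℕ → ℤ)
    (hM : ∀ n, IsGreatest (Set.range fun i => pSum r i n) (M n))
    (hM' : ∀ n, IsGreatest (Set.range fun i => pSum (fun k => (-1) ^ k * r k) i n) (M' n))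
    (n : ℕ) (hn : 1 ≤ n) :
    (abelianComplexity r n : ℤ) = M n + 1 ∧
    (abelianComplexity (fun k => (-1) ^ k * r k) n : ℤ) = M' n + 1 := by
  have hrec : RudinShapiroRec r := ⟨hre, hro⟩
  have hpm (k : ℕ) : r k = 1 ∨ r k = -1 := hr0 ▸ hrec.eq_or_eq_neg k
  have hpm' (k : ℕ) : (-1) ^ k * r k = 1 ∨ (-1) ^ k * r k = -1 :=
    Int.isUnit_iff.1 ((isUnit_one.neg.pow k).mul (Int.isUnit_iff.2 (hpm k)))
  have hneg := hrec.prefixesRecurNegated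
  exact ⟨abelianComplexity_eq_add_one_of_isGreatest hpm (hneg.exists_pSum_eq_neg n) (hM n),
    abelianComplexity_eq_add_one_of_isGreatest hpm' (hneg.neg_one_pow_mul.exists_pSum_eq_neg n)
      (hM' n)⟩
end

section
/- For every n ≥ 1: M_r(4n) ≤ 2M_r(n) + 2, M_r(4n+1) ≤ 2M_r(n) + 1, M_r(4n+2) ≤ M_r(n) + M_r(n+1) + 1, and M_r(4n+3) ≤ 2M_r(n+1) + 1. Moreover, the same four inequalities hold with M_r replaced by M_{r'}. -/
/-!
Write `S k = w 0 + ⋯ + w (k - 1)`. The blocks `w (4m), …, w (4m + 3)` of the Rudin–Shapiro sequence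
have the shape `(w m, w m, c, -c)`, those of `r'` the shape `(c, -c, w m, w m)`. Hence, with `s = 2`
in the first case and `s = 0` in the second, `S k = S ⌊(k + s) / 4⌋ + S ⌊(k + s + 1) / 4⌋ + d k`,
where the defect `d k` vanishes unless `k + s ≡ 1 (mod 4)` and is then a single term of `w`.

Subtracting this at the two ends, a window sum of length `4n + t` is a sum of two window sums of
lengths `n` or `n + 1`, up to at most two defects. The residue of `i + s` modulo `4` tells which
lengths and which defects occur, and replacing `n` by `n + 1` or conversely changes the
maximal sum by at most `1`.
-/

section WindowSums

variable {w M : ℕ → ℤ}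

theorem pSum_succ (w : ℕ → ℤ) (i n : ℕ) : pSum w i (n + 1) = pSum w i n + w (i + n) :=
  Finset.sum_range_succ _ _

theorem pSum_eq_sub (w : ℕ → ℤ) (i n : ℕ) : pSum w i n = pSum w 0 (i + n) - pSum w 0 i := by
  simp [pSum, Finset.sum_range_add]

theorem pSum_zero_mul {b : ℕ} {c : ℤ} (h : ∀ m, pSum w (b * m) b = c * w m) (m : ℕ) :
    pSum w 0 (b * m) = c * pSum w 0 m := by
  induction m with
  | zero => simp [pSum]
  | succ m ih =>
    have hblock := pSum_eq_sub w (b * m) b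
    rw [pSum_succ, zero_add, mul_add_one, mul_add, ← h, hblock, ih]
    ring

theorem abs_maxSum_succ_sub_le {C : ℤ} (hw : ∀ k, |w k| ≤ C)
    (hM : ∀ n, IsGreatest (Set.range fun i => pSum w i n) (M n)) (n : ℕ) :
    |M (n + 1) - M n| ≤ C := by
  obtain ⟨i, hi⟩ := (hM (n + 1)).1
  obtain ⟨j, hj⟩ := (hM n).1
  have hi' : pSum w i n ≤ M n := (hM n).2 ⟨i, rfl⟩
  have hj' : pSum w j (n + 1) ≤ M (n + 1) := (hM (n + 1)).2 ⟨j, rfl⟩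
  simp only [pSum_succ] at hi hj hj'
  rw [abs_le]
  constructor
  · linarith [neg_le_of_abs_le (hw (j + n))]
  · linarith [le_of_abs_le (hw (i + n))]

end WindowSums

section QuarterSplit

/-- The error in approximating the prefix sum of length `k` by two prefix sums of about a quarter of
that length; the shift `s` accounts for the position of the terms that repeat `w m` in the `m`-th
block of four. -/
def quarterDefect (w : ℕ → ℤ) (s k : ℕ) : ℤ :=
  pSum w 0 k - (pSum w 0 ((k + s) / 4) + pSum w 0 ((k + s + 1) / 4))

/-- Self-similarity of prefix sums under division by four: splitting into two quarters is exact away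
from one residue class modulo `4`, and has error at most `C` there. -/
structure IsQuarterSplit (w : ℕ → ℤ) (s : ℕ) (C : ℤ) : Prop where
  defect_eq_zero : ∀ k, (k + s) % 4 ≠ 1 → quarterDefect w s k = 0
  abs_defect_le : ∀ k, |quarterDefect w s k| ≤ C

variable {w M : ℕ → ℤ} {s : ℕ} {C : ℤ}

theorem quarterDefect_of_repeat_cancel (h0 : ∀ m, w (4 * m) = w m) (h1 : ∀ m, w (4 * m + 1) = w m)
    (h3 : ∀ m, w (4 * m + 3) = -w (4 * m + 2)) (m : ℕ) :
    quarterDefect w 2 (4 * m) = 0 ∧ quarterDefect w 2 (4 * m + 1) = 0 ∧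
      quarterDefect w 2 (4 * m + 2) = 0 ∧ quarterDefect w 2 (4 * m + 3) = w (4 * m + 2) := by
  have hS : pSum w 0 (4 * m) = 2 * pSum w 0 m := by
    refine pSum_zero_mul (fun m => ?_) m
    simp only [pSum, Finset.sum_range_succ, Finset.sum_range_zero, add_zero, h0, h1, h3]
    ring
  have hdiv (j : ℕ) : (4 * m + j) / 4 = m + j / 4 := by omega
  simp only [quarterDefect, add_assoc, hdiv, Nat.reduceAdd, Nat.reduceDiv, add_zero]
  simp only [pSum_succ, zero_add, hS, h0, h1]
  refine ⟨?_, ?_, ?_, ?_⟩ <;> ring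

theorem quarterDefect_of_cancel_repeat (h1 : ∀ m, w (4 * m + 1) = -w (4 * m))
    (h2 : ∀ m, w (4 * m + 2) = w m) (h3 : ∀ m, w (4 * m + 3) = w m) (m : ℕ) :
    quarterDefect w 0 (4 * m) = 0 ∧ quarterDefect w 0 (4 * m + 1) = w (4 * m) ∧
      quarterDefect w 0 (4 * m + 2) = 0 ∧ quarterDefect w 0 (4 * m + 3) = 0 := by
  have hS : pSum w 0 (4 * m) = 2 * pSum w 0 m := by
    refine pSum_zero_mul (fun m => ?_) m
    simp only [pSum, Finset.sum_range_succ, Finset.sum_range_zero, add_zero, h1, h2, h3]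
    ring
  have hdiv (j : ℕ) : (4 * m + j) / 4 = m + j / 4 := by omega
  simp only [quarterDefect, add_zero, add_assoc, hdiv, Nat.reduceAdd, Nat.reduceDiv,
    Nat.mul_div_cancel_left m four_pos]
  simp only [pSum_succ, zero_add, hS, h1, h2]
  refine ⟨?_, ?_, ?_, ?_⟩ <;> ring

theorem exists_eq_four_mul_add (k : ℕ) :
    ∃ m, k = 4 * m ∨ k = 4 * m + 1 ∨ k = 4 * m + 2 ∨ k = 4 * m + 3 :=
  ⟨k / 4, by omega⟩

theorem IsQuarterSplit.of_repeat_cancel (hw : ∀ k, |w k| ≤ C) (h0 : ∀ m, w (4 * m) = w m)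
    (h1 : ∀ m, w (4 * m + 1) = w m) (h3 : ∀ m, w (4 * m + 3) = -w (4 * m + 2)) :
    IsQuarterSplit w 2 C := by
  have hC : 0 ≤ C := (abs_nonneg _).trans (hw 0)
  have hd := quarterDefect_of_repeat_cancel h0 h1 h3
  constructor <;> intro k <;> obtain ⟨m, rfl | rfl | rfl | rfl⟩ := exists_eq_four_mul_add k
  · exact fun _ => (hd m).1
  · exact fun _ => (hd m).2.1
  · exact fun _ => (hd m).2.2.1
  · exact fun hk => absurd (by omega) hk
  · simpa [(hd m).1] using hC
  · simpa [(hd m).2.1] using hC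
  · simpa [(hd m).2.2.1] using hC
  · simpa [(hd m).2.2.2] using hw _

theorem IsQuarterSplit.of_cancel_repeat (hw : ∀ k, |w k| ≤ C)
    (h1 : ∀ m, w (4 * m + 1) = -w (4 * m)) (h2 : ∀ m, w (4 * m + 2) = w m)
    (h3 : ∀ m, w (4 * m + 3) = w m) : IsQuarterSplit w 0 C := by
  have hC : 0 ≤ C := (abs_nonneg _).trans (hw 0)
  have hd := quarterDefect_of_cancel_repeat h1 h2 h3
  constructor <;> intro k <;> obtain ⟨m, rfl | rfl | rfl | rfl⟩ := exists_eq_four_mul_add k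
  · exact fun _ => (hd m).1
  · exact fun hk => absurd (by omega) hk
  · exact fun _ => (hd m).2.2.1
  · exact fun _ => (hd m).2.2.2
  · simpa [(hd m).1] using hC
  · simpa [(hd m).2.1] using hw _
  · simpa [(hd m).2.2.1] using hC
  · simpa [(hd m).2.2.2] using hC

theorem pSum_le_add_quarterDefect_sub (hM : ∀ i n, pSum w i n ≤ M n) {i n p q : ℕ}
    (hp : (i + n + s) / 4 = (i + s) / 4 + p) (hq : (i + n + s + 1) / 4 = (i + s + 1) / 4 + q) :
    pSum w i n ≤ M p + M q + (quarterDefect w s (i + n) - quarterDefect w s i) := by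
  have hp' := hM ((i + s) / 4) p
  have hq' := hM ((i + s + 1) / 4) q
  rw [pSum_eq_sub, ← hp] at hp'
  rw [pSum_eq_sub, ← hq] at hq'
  rw [pSum_eq_sub, quarterDefect, quarterDefect]
  linarith

namespace IsQuarterSplit

theorem pSum_le_of_mod_ne (h : IsQuarterSplit w s C) (hM : ∀ i n, pSum w i n ≤ M n)
    {i n p q : ℕ} (hp : (i + n + s) / 4 = (i + s) / 4 + p)
    (hq : (i + n + s + 1) / 4 = (i + s + 1) / 4 + q)
    (hstart : (i + s) % 4 ≠ 1) (hend : (i + n + s) % 4 ≠ 1) :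
    pSum w i n ≤ M p + M q := by
  simpa [h.defect_eq_zero _ hstart, h.defect_eq_zero _ hend] using
    pSum_le_add_quarterDefect_sub hM hp hq

theorem pSum_le_of_not_and_mod_eq (h : IsQuarterSplit w s C) (hM : ∀ i n, pSum w i n ≤ M n)
    {i n p q : ℕ} (hp : (i + n + s) / 4 = (i + s) / 4 + p)
    (hq : (i + n + s + 1) / 4 = (i + s + 1) / 4 + q)
    (hne : (i + s) % 4 ≠ 1 ∨ (i + n + s) % 4 ≠ 1) :
    pSum w i n ≤ M p + M q + C := by
  have hle := pSum_le_add_quarterDefect_sub hM hp hq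
  rcases hne with hstart | hend
  · linarith [h.defect_eq_zero _ hstart, le_of_abs_le (h.abs_defect_le (i + n))]
  · linarith [h.defect_eq_zero _ hend, neg_le_of_abs_le (h.abs_defect_le i)]

theorem maxSum_four_mul_le (h : IsQuarterSplit w s C)
    (hM : ∀ n, IsGreatest (Set.range fun i => pSum w i n) (M n)) (n : ℕ) :
    M (4 * n) ≤ 2 * M n + 2 * C := by
  obtain ⟨i, hi⟩ := (hM (4 * n)).1
  have hle : pSum w i (4 * n) ≤ M n + M n + (quarterDefect w s (i + 4 * n) - quarterDefect w s i) :=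
    pSum_le_add_quarterDefect_sub (fun i n => (hM n).2 ⟨i, rfl⟩) (by omega) (by omega)
  linarith [le_of_abs_le (h.abs_defect_le (i + 4 * n)), neg_le_of_abs_le (h.abs_defect_le i)]

theorem maxSum_four_mul_add_one_le (h : IsQuarterSplit w s C) (hw : ∀ k, |w k| ≤ C)
    (hM : ∀ n, IsGreatest (Set.range fun i => pSum w i n) (M n)) (n : ℕ) :
    M (4 * n + 1) ≤ 2 * M n + C := by
  obtain ⟨i, hi⟩ := (hM (4 * n + 1)).1
  have hM' : ∀ i n, pSum w i n ≤ M n := fun i n => (hM n).2 ⟨i, rfl⟩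
  have hstep := le_of_abs_le (abs_maxSum_succ_sub_le hw hM n)
  obtain hr | hr | hr : (i + s) % 4 < 2 ∨ (i + s) % 4 = 2 ∨ (i + s) % 4 = 3 := by omega
  · have := h.pSum_le_of_not_and_mod_eq hM' (i := i) (n := 4 * n + 1) (p := n) (q := n)
      (by omega) (by omega) (by omega)
    linarith
  · have := h.pSum_le_of_mod_ne hM' (i := i) (n := 4 * n + 1) (p := n) (q := n + 1)
      (by omega) (by omega) (by omega) (by omega)
    linarith
  · have := h.pSum_le_of_mod_ne hM' (i := i) (n := 4 * n + 1) (p := n + 1) (q := n)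
      (by omega) (by omega) (by omega) (by omega)
    linarith

theorem maxSum_four_mul_add_two_le (h : IsQuarterSplit w s C) (hw : ∀ k, |w k| ≤ C)
    (hM : ∀ n, IsGreatest (Set.range fun i => pSum w i n) (M n)) (n : ℕ) :
    M (4 * n + 2) ≤ M n + M (n + 1) + C := by
  obtain ⟨i, hi⟩ := (hM (4 * n + 2)).1
  have hM' : ∀ i n, pSum w i n ≤ M n := fun i n => (hM n).2 ⟨i, rfl⟩
  obtain ⟨hdown, hup⟩ := abs_le.1 (abs_maxSum_succ_sub_le hw hM n)
  obtain hr | hr | hr | hr :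
      (i + s) % 4 = 0 ∨ (i + s) % 4 = 1 ∨ (i + s) % 4 = 2 ∨ (i + s) % 4 = 3 := by omega
  · have := h.pSum_le_of_mod_ne hM' (i := i) (n := 4 * n + 2) (p := n) (q := n)
      (by omega) (by omega) (by omega) (by omega)
    linarith
  · have := h.pSum_le_of_not_and_mod_eq hM' (i := i) (n := 4 * n + 2) (p := n) (q := n + 1)
      (by omega) (by omega) (by omega)
    linarith
  · have := h.pSum_le_of_mod_ne hM' (i := i) (n := 4 * n + 2) (p := n + 1) (q := n + 1)
      (by omega) (by omega) (by omega) (by omega)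
    linarith
  · have := h.pSum_le_of_not_and_mod_eq hM' (i := i) (n := 4 * n + 2) (p := n + 1) (q := n)
      (by omega) (by omega) (by omega)
    linarith

theorem maxSum_four_mul_add_three_le (h : IsQuarterSplit w s C) (hw : ∀ k, |w k| ≤ C)
    (hM : ∀ n, IsGreatest (Set.range fun i => pSum w i n) (M n)) (n : ℕ) :
    M (4 * n + 3) ≤ 2 * M (n + 1) + C := by
  obtain ⟨i, hi⟩ := (hM (4 * n + 3)).1
  have hM' : ∀ i n, pSum w i n ≤ M n := fun i n => (hM n).2 ⟨i, rfl⟩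
  have hstep := neg_le_of_abs_le (abs_maxSum_succ_sub_le hw hM n)
  obtain hr | hr | hr :
      (i + s) % 4 = 0 ∨ ((i + s) % 4 = 1 ∨ (i + s) % 4 = 2) ∨ (i + s) % 4 = 3 := by omega
  · have := h.pSum_le_of_mod_ne hM' (i := i) (n := 4 * n + 3) (p := n) (q := n + 1)
      (by omega) (by omega) (by omega) (by omega)
    linarith
  · have := h.pSum_le_of_not_and_mod_eq hM' (i := i) (n := 4 * n + 3) (p := n + 1) (q := n + 1)
      (by omega) (by omega) (by omega)
    linarith
  · have := h.pSum_le_of_mod_ne hM' (i := i) (n := 4 * n + 3) (p := n + 1) (q := n)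
      (by omega) (by omega) (by omega) (by omega)
    linarith

end IsQuarterSplit

end QuarterSplit

/-- The Rudin–Shapiro recursion without its initial condition: the solutions are the integer
multiples of the Rudin–Shapiro sequence. -/
structure IsRudinShapiroRec (r : ℕ → ℤ) : Prop where
  even : ∀ n, r (2 * n) = r n
  odd : ∀ n, r (2 * n + 1) = (-1) ^ n * r n

namespace IsRudinShapiroRec

variable {r : ℕ → ℤ}

theorem abs_eq_abs_zero (h : IsRudinShapiroRec r) (n : ℕ) : |r n| = |r 0| := by
  induction n using Nat.evenOddRec with
  | h0 => rfl
  | h_even n ih => rw [h.even, ih]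
  | h_odd n ih => rw [h.odd, abs_mul, abs_neg_one_pow, one_mul, ih]

theorem four_mul (h : IsRudinShapiroRec r) (m : ℕ) : r (4 * m) = r m := by
  rw [show 4 * m = 2 * (2 * m) by ring, h.even, h.even]

theorem four_mul_add_one (h : IsRudinShapiroRec r) (m : ℕ) : r (4 * m + 1) = r m := by
  rw [show 4 * m + 1 = 2 * (2 * m) + 1 by ring, h.odd, h.even, (even_two_mul m).neg_one_pow,
    one_mul]

theorem four_mul_add_two (h : IsRudinShapiroRec r) (m : ℕ) : r (4 * m + 2) = (-1) ^ m * r m := by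
  rw [show 4 * m + 2 = 2 * (2 * m + 1) by ring, h.even, h.odd]

theorem four_mul_add_three (h : IsRudinShapiroRec r) (m : ℕ) :
    r (4 * m + 3) = -((-1) ^ m * r m) := by
  rw [show 4 * m + 3 = 2 * (2 * m + 1) + 1 by ring, h.odd, h.odd,
    (odd_two_mul_add_one m).neg_one_pow, neg_one_mul]

theorem isQuarterSplit (h : IsRudinShapiroRec r) : IsQuarterSplit r 2 |r 0| :=
  .of_repeat_cancel (fun k => (h.abs_eq_abs_zero k).le) h.four_mul h.four_mul_add_one
    fun m => by rw [h.four_mul_add_three, h.four_mul_add_two]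

theorem abs_neg_one_pow_mul (h : IsRudinShapiroRec r) (n : ℕ) : |(-1) ^ n * r n| = |r 0| := by
  rw [abs_mul, abs_neg_one_pow, one_mul, h.abs_eq_abs_zero]

theorem isQuarterSplit_neg_one_pow_mul (h : IsRudinShapiroRec r) :
    IsQuarterSplit (fun k => (-1) ^ k * r k) 0 |r 0| := by
  have hsign (m : ℕ) : (-1 : ℤ) ^ (4 * m) = 1 := by rw [pow_mul]; norm_num
  refine .of_cancel_repeat (fun k => (h.abs_neg_one_pow_mul k).le) (fun m => ?_) (fun m => ?_)
    fun m => ?_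
  · rw [h.four_mul, h.four_mul_add_one, pow_succ, hsign]
    ring
  · rw [h.four_mul_add_two, pow_add, hsign]
    ring
  · rw [h.four_mul_add_three, pow_add, hsign]
    ring

end IsRudinShapiroRec

/-- **Statement.** Bounds for the maximal sums of consecutive terms of the
Rudin–Shapiro sequence `r` and of the related sequence `r'(n) = (−1)^n r(n)`. -/
theorem max_sum_upper_bounds
    (r : ℕ → ℤ) (hr0 : r 0 = 1)
    (hre : ∀ n, r (2 * n) = r n)
    (hro : ∀ n, r (2 * n + 1) = (-1) ^ n * r n)
    (M M' : ℕ → ℤ)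
    (hM : ∀ n, IsGreatest (Set.range fun i => pSum r i n) (M n))
    (hM' : ∀ n, IsGreatest (Set.range fun i => pSum (fun k => (-1) ^ k * r k) i n) (M' n))
    (n : ℕ) (hn : 1 ≤ n) :
    (M (4 * n) ≤ 2 * M n + 2 ∧
     M (4 * n + 1) ≤ 2 * M n + 1 ∧
     M (4 * n + 2) ≤ M n + M (n + 1) + 1 ∧
     M (4 * n + 3) ≤ 2 * M (n + 1) + 1) ∧
    (M' (4 * n) ≤ 2 * M' n + 2 ∧
     M' (4 * n + 1) ≤ 2 * M' n + 1 ∧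
     M' (4 * n + 2) ≤ M' n + M' (n + 1) + 1 ∧
     M' (4 * n + 3) ≤ 2 * M' (n + 1) + 1) := by
  have h : IsRudinShapiroRec r := ⟨hre, hro⟩
  have hone : |r 0| = 1 := by rw [hr0, abs_one]
  have hw (k : ℕ) : |r k| ≤ 1 := (h.abs_eq_abs_zero k).trans hone |>.le
  have hw' (k : ℕ) : |(-1) ^ k * r k| ≤ 1 := (h.abs_neg_one_pow_mul k).trans hone |>.le
  have hs : IsQuarterSplit r 2 1 := hone ▸ h.isQuarterSplit
  have hs' : IsQuarterSplit (fun k => (-1) ^ k * r k) 0 1 :=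
    hone ▸ h.isQuarterSplit_neg_one_pow_mul
  exact ⟨⟨hs.maxSum_four_mul_le hM n, hs.maxSum_four_mul_add_one_le hw hM n,
      hs.maxSum_four_mul_add_two_le hw hM n, hs.maxSum_four_mul_add_three_le hw hM n⟩,
    hs'.maxSum_four_mul_le hM' n, hs'.maxSum_four_mul_add_one_le hw' hM' n,
    hs'.maxSum_four_mul_add_two_le hw' hM' n, hs'.maxSum_four_mul_add_three_le hw' hM' n⟩
end
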